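/- arXiv:2304.09455 — 7 statements merged into one kernel-verified Lean document; each statement's English description precedes it below -/
import Mathlib

section
/- For every rational number x there exists a natural number t with t < x.den such that the t-th iterate T^[t](x) is an integer; in particular the c-series expansion of every rational number is finite, of length at most x.den. -/
/-- The even-rounded floor `c(x)`: equal to `x` if `x` is an integer; otherwise
`⌊x⌋` if `⌊x⌋` is even and `⌊x⌋ + 1` if `⌊x⌋` is odd. -/
noncomputable def evenFloor (x : ℚ) : ℤ :=
  if x.den = 1 then x.num
  else if Even ⌊x⌋ then ⌊x⌋ else ⌊x⌋ + 1

/-- The step map of the even continued fraction (c-series) expansion: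
`T x = (x - c x)⁻¹` if `x` is not an integer, and `T x = 0` otherwise. -/
noncomputable def stepMap (x : ℚ) : ℚ :=
  if x.den = 1 then 0 else (x - evenFloor x)⁻¹

theorem stepMap_den_lt (x : ℚ) (h : x.den ≠ 1) : (stepMap x).den < x.den := by
  have hne : ∀ n : ℤ, x ≠ n := by
    rintro n rfl
    simp at h
  have hy : |x - evenFloor x| < 1 := by
    have h1 := Int.floor_le x
    have h2 := Int.lt_floor_add_one x
    have h3 : (⌊x⌋ : ℚ) < x := lt_of_le_of_ne h1 (fun e => hne _ e.symm)
    unfold evenFloor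
    rw [if_neg h, abs_lt]
    split_ifs <;> push_cast <;> constructor <;> linarith
  have hd : (x - evenFloor x).den = x.den := by
    simp
  have h0 : x - evenFloor x ≠ 0 := sub_ne_zero.mpr (hne _)
  unfold stepMap
  rw [if_neg h]
  generalize x - evenFloor x = y at *
  rw [← hd]
  have hn : y.num ≠ 0 := Rat.num_ne_zero.mpr h0
  have e : (y⁻¹).den = y.num.natAbs := by
    simp [Rat.den_inv, hn]
  rw [e]
  have hp : (0 : ℚ) < y.den := by exact_mod_cast y.den_pos
  have h4 : |(y.num : ℚ)| < y.den := by
    rw [← Rat.num_div_den y, abs_div, abs_of_pos hp, div_lt_one hp] at hy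
    exact hy
  have h5 : |y.num| < (y.den : ℤ) := by exact_mod_cast h4
  rw [Int.abs_eq_natAbs] at h5
  exact_mod_cast h5

/-- For every rational `x` there is `t < x.den` with `T^[t] x` an integer:
the c-series expansion of every rational is finite, of length at most `x.den`. -/
theorem stepMap_iterate_isInt (x : ℚ) :
    ∃ t : ℕ, t < x.den ∧ (stepMap^[t] x).den = 1 := by
  induction hn : x.den using Nat.strong_induction_on generalizing x with
  | _ n ih =>
    subst hn
    by_cases h : x.den = 1
    · exact ⟨0, x.den_pos, h⟩
    · have hl := stepMap_den_lt x h
      obtain ⟨t, ht, h1⟩ := ih _ hl (stepMap x) rfl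
      exact ⟨t + 1, by omega, h1⟩
end

section
/- For every rational number x that is not an integer, the rational number T(x) satisfies: its denominator equals |x.num − c(x)·x.den|, the absolute value of its numerator equals x.den, and its denominator is strictly smaller than x.den. -/
/-- For a non-integer rational `x`, the denominator of `T x` equals
`|x.num - c x * x.den|`, the absolute value of the numerator of `T x`
equals `x.den`, and the denominator strictly decreases. -/
theorem stepMap_num_den (x : ℚ) (hx : x.den ≠ 1) :
    (stepMap x).den = (x.num - evenFloor x * (x.den : ℤ)).natAbs ∧
      (stepMap x).num.natAbs = x.den ∧ (stepMap x).den < x.den := by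
  have hne : ∀ n : ℤ, x ≠ n := by
    rintro n rfl
    exact hx (Rat.den_intCast n)
  have hfl : (⌊x⌋ : ℚ) < x := lt_of_le_of_ne (Int.floor_le x) (hne _).symm
  have hfu : x < ⌊x⌋ + 1 := Int.lt_floor_add_one x
  have habs : |x - evenFloor x| < 1 := by
    rw [abs_lt]
    unfold evenFloor
    rw [if_neg hx]
    split_ifs
    · constructor <;> linarith
    · push_cast
      constructor <;> linarith
  have hT : stepMap x = (x - evenFloor x)⁻¹ := by
    unfold stepMap
    rw [if_neg hx]
  have hy0 : x - evenFloor x ≠ 0 := sub_ne_zero.mpr (hne _)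
  rw [hT]
  generalize evenFloor x = c at *
  have hden : (x - c).den = x.den := Rat.sub_intCast_den x c
  have hpos : (0 : ℚ) < x.den := by exact_mod_cast x.den_pos
  have hq : ((x - c).num : ℚ) = (x - c) * x.den := by
    rw [← hden]
    exact (Rat.mul_den_eq_num (x - c)).symm
  have hnum : (x - c).num = x.num - c * (x.den : ℤ) := by
    have h : ((x - c).num : ℚ) = ((x.num - c * (x.den : ℤ) : ℤ) : ℚ) := by
      rw [hq, sub_mul, Rat.mul_den_eq_num]
      push_cast
      rfl
    exact_mod_cast h
  have hd : (x - c)⁻¹.den = (x - c).num.natAbs := Rat.den_inv_of_ne_zero hy0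
  refine ⟨by rw [hd, hnum], ?_, ?_⟩
  · rw [Rat.num_inv, Int.natAbs_mul, Int.natAbs_sign_of_ne_zero (Rat.num_ne_zero.mpr hy0), hden]
    simp
  · rw [hd]
    have h : |((x - c).num : ℚ)| < x.den := by
      rw [hq, abs_mul, abs_of_pos hpos]
      exact mul_lt_of_lt_one_left hpos habs
    have h2 : |(x - c).num| < (x.den : ℤ) := by exact_mod_cast h
    rw [Int.abs_eq_natAbs] at h2
    exact_mod_cast h2
end

section
/- Let x be a rational number and let k(x) be the least natural number t such that T^[t](x) is an integer. Then for every index i with 1 ≤ i ≤ k(x), the c-series term c_i := c(T^[i](x)) satisfies |c_i| ≥ 2; in particular no term of the c-series after the initial one equals −1, 0, or 1. -/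
theorem floor_lt_of_den_ne (y : ℚ) (hy : y.den ≠ 1) : (⌊y⌋ : ℚ) < y := by
  refine lt_of_le_of_ne (Int.floor_le y) ?_
  intro h
  apply hy
  rw [← h]
  simp

theorem one_lt_abs_stepMap (y : ℚ) (hy : y.den ≠ 1) : 1 < |stepMap y| := by
  have h1 := floor_lt_of_den_ne y hy
  have h2 := Int.lt_floor_add_one y
  unfold stepMap evenFloor
  rw [if_neg hy, if_neg hy, abs_inv]
  apply (one_lt_inv₀ _).2
  · split_ifs
    · rw [abs_lt]; constructor <;> linarith
    · push_cast
      rw [abs_lt]; constructor <;> linarith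
  · rw [abs_pos]
    split_ifs
    · exact ne_of_gt (by linarith)
    · push_cast
      exact ne_of_lt (by linarith)

theorem two_le_abs_evenFloor (z : ℚ) (hz : 1 < |z|) : 2 ≤ |evenFloor z| := by
  unfold evenFloor
  split_ifs with h1 h2
  · have h : ((z.num : ℤ) : ℚ) = z := Rat.den_eq_one_iff z |>.1 h1
    rw [← h] at hz
    have : (1 : ℤ) < |z.num| := by exact_mod_cast hz
    omega
  all_goals
    rcases lt_abs.1 hz with h | h
    · have : 1 ≤ ⌊z⌋ := Int.le_floor.2 (by push_cast; linarith)
      rw [le_abs]; left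
      grind
    · have : ⌊z⌋ < -1 := Int.floor_lt.2 (by push_cast; linarith)
      rw [le_abs]; right
      grind

/-- With `k x` the least `t` such that `T^[t] x` is an integer, every c-series
term `cᵢ = c (T^[i] x)` with `1 ≤ i ≤ k x` satisfies `|cᵢ| ≥ 2`; in particular
no term after the initial one equals `-1`, `0` or `1`. -/
theorem evenFloor_iterate_abs_ge_two (x : ℚ)
    (k : ℕ) (hk : k = sInf {t : ℕ | (stepMap^[t] x).den = 1}) :
    ∀ i : ℕ, 1 ≤ i → i ≤ k →
      2 ≤ |evenFloor (stepMap^[i] x)| ∧ evenFloor (stepMap^[i] x) ≠ -1 ∧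
        evenFloor (stepMap^[i] x) ≠ 0 ∧ evenFloor (stepMap^[i] x) ≠ 1 := by
  intro i h1 hi
  have key : 2 ≤ |evenFloor (stepMap^[i] x)| := by
    obtain ⟨j, rfl⟩ : ∃ j, i = j + 1 := ⟨i - 1, by omega⟩
    rw [Function.iterate_succ_apply']
    apply two_le_abs_evenFloor
    apply one_lt_abs_stepMap
    intro h
    have : sInf {t : ℕ | (stepMap^[t] x).den = 1} ≤ j := Nat.sInf_le h
    omega
  refine ⟨key, ?_, ?_, ?_⟩ <;> intro h <;> rw [h] at key <;> norm_num at key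
end

section
/- For every rational number x that is not an integer, the numerator of T(x) is congruent to the denominator of x modulo 2, and the denominator of T(x) is congruent to the numerator of x modulo 2; that is, one step of the even continued fraction expansion swaps the parities of the numerator and denominator. -/
/-- One step of the even continued fraction expansion swaps the parities of
the numerator and denominator: for non-integer `x`, `(T x).num ≡ x.den [ZMOD 2]`
and `(T x).den ≡ x.num [ZMOD 2]`. -/
theorem stepMap_parity_swap (x : ℚ) (hx : x.den ≠ 1) :
    (stepMap x).num % 2 = (x.den : ℤ) % 2 ∧ ((stepMap x).den : ℤ) % 2 = x.num % 2 := by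
  have hc : ∃ k : ℤ, evenFloor x = 2 * k := by
    unfold evenFloor
    rw [if_neg hx]
    split_ifs with h
    · obtain ⟨k, hk⟩ := h
      exact ⟨k, by omega⟩
    · obtain ⟨k, hk⟩ := Int.not_even_iff_odd.mp h
      exact ⟨k + 1, by omega⟩
  obtain ⟨k, hk⟩ := hc
  unfold stepMap
  rw [if_neg hx, hk]
  have hd : (x - ((2 * k : ℤ) : ℚ)).den = x.den := Rat.sub_intCast_den x (2 * k)
  have hn : (x - ((2 * k : ℤ) : ℚ)).num = x.num - 2 * (k * x.den) := by
    have h1 := Rat.mul_den_eq_num (x - ((2 * k : ℤ) : ℚ))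
    have h2 := Rat.mul_den_eq_num x
    rw [hd, sub_mul, h2] at h1
    have h3 : (((x - ((2 * k : ℤ) : ℚ)).num : ℤ) : ℚ) = ((x.num - 2 * (k * x.den) : ℤ) : ℚ) := by
      rw [← h1]; push_cast; ring
    exact_mod_cast h3
  generalize x - ((2 * k : ℤ) : ℚ) = y at hd hn
  have hy : y.num ≠ 0 := by
    intro h
    rw [Rat.num_eq_zero] at h
    subst h
    exact hx (by simpa using hd.symm)
  rw [Rat.num_inv, Rat.den_inv, if_neg hy, hd]
  generalize k * (x.den : ℤ) = m at hn
  constructor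
  · rcases lt_or_gt_of_ne hy with h | h
    · rw [Int.sign_eq_neg_one_of_neg h]; omega
    · rw [Int.sign_eq_one_of_pos h]; omega
  · omega
end

section
/- Let x be a rational number whose numerator (in lowest terms) is even and whose denominator is odd, and let k(x) be the least natural number t such that T^[t](x) is an integer. Then the final c-series term, the integer T^[k(x)](x), is even, and the index k(x) is even. -/
lemma step_facts (x : ℚ) (hx : x.den ≠ 1) :
    (stepMap x).den < x.den ∧ (Even (stepMap x).den ↔ Even x.num) ∧
      (Even (stepMap x).num ↔ Even x.den) := by
  obtain ⟨c, hc, hce, hlo, hhi⟩ : ∃ c : ℤ, evenFloor x = c ∧ Even c ∧ -1 < x - c ∧ x - c < 1 := by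
    have h1 := Int.floor_le x
    have h2 := Int.lt_floor_add_one x
    have h3 : (⌊x⌋ : ℚ) ≠ x := by
      intro h
      apply hx
      rw [← h]
      exact Rat.den_intCast _
    have h4 := lt_of_le_of_ne h1 h3
    refine ⟨_, rfl, ?_⟩
    unfold evenFloor
    rw [if_neg hx]
    split_ifs with he
    · exact ⟨he, by linarith, by linarith⟩
    · refine ⟨(Int.not_even_iff_odd.mp he).add_one, ?_, ?_⟩ <;> push_cast <;> linarith
  have hT : stepMap x = (x - c)⁻¹ := by
    unfold stepMap
    rw [if_neg hx, hc]
  have hd : (x - c).den = x.den := Rat.sub_intCast_den x c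
  have hpos : (0 : ℚ) < x.den := by exact_mod_cast x.pos
  have hn0 : (x - c).num ≠ 0 := by
    intro h
    apply hx
    rw [Rat.num_eq_zero] at h
    rw [← hd, h]
    rfl
  have hy : (x - c) * x.den = (x - c).num := by
    have := Rat.mul_den_eq_num (x - c)
    rwa [hd] at this
  have hn : (x - c).num = x.num - c * x.den := by
    have h1 := Rat.mul_den_eq_num x
    have h2 : ((x - c).num : ℚ) = x.num - c * x.den := by rw [← hy, ← h1]; ring
    exact_mod_cast h2
  have hlt : (x - c).num.natAbs < x.den := by
    have a1 : ((x - c).num : ℚ) < x.den := by rw [← hy]; nlinarith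
    have a2 : -(x.den : ℚ) < ((x - c).num : ℚ) := by rw [← hy]; nlinarith
    have a3 : (x - c).num < (x.den : ℤ) := by exact_mod_cast a1
    have a4 : -(x.den : ℤ) < (x - c).num := by exact_mod_cast a2
    omega
  have hden : (stepMap x).den = (x - c).num.natAbs := by
    rw [hT, Rat.den_inv, if_neg hn0]
  have hnum : (stepMap x).num = (x - c).num.sign * x.den := by
    rw [hT, Rat.num_inv, hd]
  refine ⟨hden ▸ hlt, ?_, ?_⟩
  · rw [hden, Int.natAbs_even, hn, Int.even_sub]
    simp [Int.even_mul, hce]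
  · rw [hnum]
    rcases lt_or_gt_of_ne hn0 with h | h
    · simp [Int.sign_eq_neg_one_of_neg h]
    · simp [Int.sign_eq_one_of_pos h]

lemma exists_term (n : ℕ) : ∀ x : ℚ, x.den ≤ n → Even x.num → Odd x.den →
    ∃ t : ℕ, Even t ∧ (stepMap^[t] x).den = 1 ∧ Even (stepMap^[t] x).num ∧
      ∀ s < t, (stepMap^[s] x).den ≠ 1 := by
  induction n with
  | zero => intro x h; have := x.pos; omega
  | succ n ih =>
    intro x hle hnum hden
    by_cases hx : x.den = 1
    · exact ⟨0, by simp, hx, hnum, by simp⟩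
    obtain ⟨a1, a2, a3⟩ := step_facts x hx
    have e1 : Even (stepMap x).den := a2.mpr hnum
    have e2 : ¬ Even (stepMap x).num := fun h => (Nat.not_even_iff_odd.mpr hden) (a3.mp h)
    have h1 : (stepMap x).den ≠ 1 := by intro h; rw [h] at e1; simp at e1
    obtain ⟨b1, b2, b3⟩ := step_facts _ h1
    obtain ⟨t, ht, c1, c2, c3⟩ := ih (stepMap (stepMap x)) (by omega) (b3.mpr e1)
      (Nat.not_even_iff_odd.mp fun h => e2 (b2.mp h))
    refine ⟨t + 2, ht.add even_two, c1, c2, ?_⟩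
    intro s hs
    match s with
    | 0 => exact hx
    | 1 => exact h1
    | s + 2 => exact c3 s (by omega)

/-- If `x.num` is even and `x.den` is odd, then with `k x` the least `t` with
`T^[t] x` an integer, the final c-series term (the integer `T^[k x] x`) is even,
and `k x` is even. -/
theorem final_term_even_of_even_odd (x : ℚ) (hnum : Even x.num) (hden : Odd x.den)
    (k : ℕ) (hk : k = sInf {t : ℕ | (stepMap^[t] x).den = 1}) :
    Even (stepMap^[k] x).num ∧ Even k := by
  obtain ⟨t, ht, c1, c2, c3⟩ := exists_term x.den x le_rfl hnum hden
  have hkt : k = t := by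
    have hle : k ≤ t := hk ▸ Nat.sInf_le c1
    have hmem : (stepMap^[k] x).den = 1 := by
      have := Nat.sInf_mem (s := {t : ℕ | (stepMap^[t] x).den = 1}) ⟨t, c1⟩
      rw [← hk] at this
      exact this
    by_contra hne
    exact c3 k (by omega) hmem
  rw [hkt]
  exact ⟨c2, ht⟩
end

section
/- Let x be a rational number whose numerator (in lowest terms) is odd and whose denominator is even, and let k(x) be the least natural number t such that T^[t](x) is an integer. Then the final c-series term, the integer T^[k(x)](x), is even, and the index k(x) is odd. -/
theorem sm_aux (x : ℚ) (h : x.den ≠ 1) :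
    (stepMap x).den < x.den ∧ (Even (stepMap x).num ↔ Even x.den) ∧
      (Even (stepMap x).den ↔ Even x.num) := by
  obtain ⟨c, hc, hce, hlt, hne⟩ : ∃ c : ℤ, evenFloor x = c ∧ Even c ∧ |x - c| < 1 ∧ x - c ≠ 0 := by
    have hne : ∀ c : ℤ, x - c ≠ 0 := by
      intro c hc
      apply h
      rw [sub_eq_zero.mp hc]; simp
    refine ⟨evenFloor x, rfl, ?_, ?_, hne _⟩
    · unfold evenFloor
      rw [if_neg h]
      split_ifs with h1
      · exact h1
      · exact (Int.not_even_iff_odd.mp h1).add_one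
    · unfold evenFloor
      rw [if_neg h]
      have h1 := Int.floor_le x
      have h2 := Int.lt_floor_add_one x
      have h3 := hne ⌊x⌋
      have h4 : (⌊x⌋ : ℚ) < x := lt_of_le_of_ne h1 (fun h => h3 (by rw [h]; ring))
      rw [abs_lt]
      split_ifs <;> push_cast <;> constructor <;> linarith
  have hs : stepMap x = (x - c)⁻¹ := by
    unfold stepMap; rw [if_neg h, hc]
  have hd : (x - c).den = x.den := by simp
  have hn : (x - c).num = x.num - c * x.den := by
    have e : ((x - c).num : ℚ) = (x - c) * x.den := by
      rw [← hd, Rat.mul_den_eq_num]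
    have e2 : x * x.den = x.num := Rat.mul_den_eq_num x
    rw [sub_mul, e2] at e
    exact_mod_cast e
  have hn0 : (x - c).num ≠ 0 := Rat.num_ne_zero.mpr hne
  have habs : (x - c).num.natAbs < x.den := by
    have e : ((x - c).num : ℚ) = (x - c) * x.den := by
      rw [← hd, Rat.mul_den_eq_num]
    have hp : (0 : ℚ) < x.den := by exact_mod_cast x.pos
    have : |((x - c).num : ℚ)| < x.den := by
      rw [e, abs_mul, abs_of_pos hp]; nlinarith
    have h2 : |(x - c).num| < (x.den : ℤ) := by exact_mod_cast this
    rw [Int.abs_eq_natAbs] at h2; exact_mod_cast h2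
  have hden : (stepMap x).den = (x - c).num.natAbs := by
    rw [hs, Rat.den_inv_of_ne_zero hne]
  have hnum : (stepMap x).num.natAbs = x.den := by
    rw [hs, Rat.num_inv, hd, Int.natAbs_mul, Int.natAbs_sign_of_ne_zero hn0]; simp
  refine ⟨by rw [hden]; exact habs, ?_, ?_⟩
  · rw [← hnum, Int.natAbs_even]
  · rw [hden, Int.natAbs_even, hn, Int.even_sub]
    have : Even (c * (x.den : ℤ)) := hce.mul_right _
    tauto

theorem sm_exists (n : ℕ) : ∀ x : ℚ, x.den = n → ∃ t : ℕ, (stepMap^[t] x).den = 1 := by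
  induction n using Nat.strong_induction_on with
  | _ n ih =>
    intro x hx
    by_cases h : x.den = 1
    · exact ⟨0, h⟩
    · obtain ⟨t, ht⟩ := ih _ (hx ▸ (sm_aux x h).1) (stepMap x) rfl
      exact ⟨t + 1, ht⟩

theorem sm_parity (x : ℚ) (hnum : Odd x.num) (hden : Even x.den) (t : ℕ) :
    (∀ s < t, (stepMap^[s] x).den ≠ 1) →
      (Even t → ¬ Even (stepMap^[t] x).num ∧ Even (stepMap^[t] x).den) ∧
      (¬ Even t → Even (stepMap^[t] x).num ∧ ¬ Even (stepMap^[t] x).den) := by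
  induction t with
  | zero =>
    intro _
    simpa using ⟨hnum, hden⟩
  | succ t ih =>
    intro h
    have h1 := ih (fun s hs => h s (by omega))
    have h2 := sm_aux _ (h t (by omega))
    rw [Function.iterate_succ_apply', Nat.even_add_one]
    tauto

theorem final_term_even_of_odd_even (x : ℚ) (hnum : Odd x.num) (hden : Even x.den)
    (k : ℕ) (hk : k = sInf {t : ℕ | (stepMap^[t] x).den = 1}) :
    Even (stepMap^[k] x).num ∧ Odd k := by
  have hmem : (stepMap^[k] x).den = 1 := by
    have := Nat.sInf_mem (s := {t : ℕ | (stepMap^[t] x).den = 1}) (sm_exists _ x rfl)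
    rw [← hk] at this
    exact this
  have hp := sm_parity x hnum hden k (fun s hs => by
    rw [hk] at hs
    exact fun h => Nat.notMem_of_lt_sInf hs h)
  have hk' : ¬ Even k := fun he => by
    have := (hp.1 he).2
    rw [hmem] at this
    exact absurd this (by decide)
  exact ⟨(hp.2 hk').1, Nat.not_even_iff_odd.mp hk'⟩
end

section
/- Let x be a rational number whose numerator and denominator (in lowest terms) are both odd, and let k(x) be the least natural number t such that T^[t](x) is an integer. Then the final c-series term, the integer T^[k(x)](x), is odd. -/
theorem odd_odd_of_div (a b : ℤ) (ha : Odd a) (hb : Odd b) :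
    Odd ((a : ℚ) / b).num ∧ Odd ((a : ℚ) / b).den := by
  have hb0 : b ≠ 0 := by rintro rfl; simp at hb
  rw [← Rat.divInt_eq_div]
  constructor
  · obtain ⟨c, hc⟩ := Rat.num_dvd a hb0
    rw [hc] at ha
    exact (Int.odd_mul.1 ha).1
  · obtain ⟨c, hc⟩ := Rat.den_dvd a b
    rw [hc] at hb
    exact_mod_cast (Int.odd_mul.1 hb).1

theorem stepMap_odd_odd (x : ℚ) (h : Odd x.num ∧ Odd x.den) (h1 : x.den ≠ 1) :
    Odd (stepMap x).num ∧ Odd (stepMap x).den := by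
  have hc : Even (evenFloor x) := by
    unfold evenFloor
    rw [if_neg h1]
    split_ifs with h2
    · exact h2
    · exact (Int.not_even_iff_odd.1 h2).add_one
  have e : stepMap x =
      (((x.den : ℤ) : ℤ) : ℚ) / ((x.num - evenFloor x * (x.den : ℤ) : ℤ) : ℚ) := by
    unfold stepMap
    rw [if_neg h1]
    have hd : (x.den : ℚ) ≠ 0 := by exact_mod_cast x.den_nz
    have hx : x - evenFloor x = ((x.num : ℚ) - evenFloor x * x.den) / x.den := by
      rw [sub_div, mul_div_cancel_right₀ _ hd, Rat.num_div_den]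
    rw [hx, inv_div]
    push_cast
    rfl
  rw [e]
  apply odd_odd_of_div
  · exact_mod_cast h.2
  · exact h.1.sub_even (hc.mul_right _)

/-- If `x.num` and `x.den` are both odd, then with `k x` the least `t` with
`T^[t] x` an integer, the final c-series term (the integer `T^[k x] x`) is odd. -/
theorem final_term_odd_of_odd_odd (x : ℚ) (hnum : Odd x.num) (hden : Odd x.den)
    (k : ℕ) (hk : k = sInf {t : ℕ | (stepMap^[t] x).den = 1}) :
    Odd (stepMap^[k] x).num := by
  have key : ∀ t ≤ k, Odd (stepMap^[t] x).num ∧ Odd (stepMap^[t] x).den := by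
    intro t
    induction t with
    | zero => intro _; exact ⟨hnum, hden⟩
    | succ n ih =>
      intro hn
      rw [Function.iterate_succ_apply']
      refine stepMap_odd_odd _ (ih (by omega)) ?_
      have : n < sInf {t : ℕ | (stepMap^[t] x).den = 1} := by omega
      have h2 := Nat.notMem_of_lt_sInf this
      exact h2
  exact (key k le_rfl).1
end
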